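/- If G is a triangle-free graph of order n with minimum degree at least 5, then ι(G) ≤ 9n/31. -/

import Mathlib

open Classical

/-- The closed neighborhood `N[D]` of a set `D` of vertices. -/
def closedNbhd {V : Type*} (G : SimpleGraph V) (D : Set V) : Set V :=
  {v | v ∈ D ∨ ∃ u ∈ D, G.Adj u v}

/-- `S` is an isolating set of `G`: deleting `N[S]` leaves no edge. -/
def IsIsolatingSet {V : Type*} (G : SimpleGraph V) (S : Set V) : Prop :=
  ∀ u v : V, G.Adj u v → u ∈ closedNbhd G S ∨ v ∈ closedNbhd G S

/-- The isolation number: the minimum cardinality of an isolating set. -/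
noncomputable def isolationNumber {V : Type*} [Fintype V] (G : SimpleGraph V) : ℕ :=
  sInf {k | ∃ S : Set V, IsIsolatingSet G S ∧ S.ncard = k}

/-!
Build the isolating set greedily. Keep a set `W` of *active* vertices, initially all of them; after
selecting a vertex `v`, deactivate some vertices all of whose edges inside `W` meet the closed
neighbourhood of `v`. The potential charges `180` for each active vertex and
`0, 33, 50, 67, 84, 84, …` for an inactive vertex with `0, 1, 2, 3, 4, 5, …` active neighbours.
As long as an edge joins active vertices, some selection lowers the potential by `620`,
so at most `180 n / 620 = 9 n / 31` vertices get selected.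

Let `p` be the maximum degree inside `W`. Usually one selects an active vertex of degree `p` and
deactivates its closed neighbourhood: for `p ≥ 4` this pays for itself, and for `p ≤ 3` each
deactivated vertex has at least `5 - p` inactive neighbours, whose weights drop. The drop per edge
is guaranteed only when inactive vertices have few active neighbours; if one of them has many
(at least `5` for `p ∈ {2, 3}`, at least `2` for `p = 1`), one selects that vertex instead. For
`p = 1` triangle-freeness makes it meet two different edges of the matching induced by `W`.
-/

namespace Isolation

open Finset

section Neighbors

variable {V : Type*} {G : SimpleGraph V} {W W' R : Finset V} {u v x y : V}

/-- The neighbours of `x` inside `W`, for an arbitrary vertex `x`, in `W` or not. -/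
noncomputable def nbrsIn (G : SimpleGraph V) (W : Finset V) (x : V) : Finset V :=
  {y ∈ W | G.Adj x y}

/-- The closed neighbourhood of `v` in the subgraph induced by `W`; meant for `v ∈ W`. -/
noncomputable def closedNbrsIn (G : SimpleGraph V) (W : Finset V) (v : V) : Finset V :=
  insert v (nbrsIn G W v)

lemma mem_nbrsIn : y ∈ nbrsIn G W x ↔ y ∈ W ∧ G.Adj x y := mem_filter

lemma mem_closedNbrsIn : y ∈ closedNbrsIn G W v ↔ y = v ∨ y ∈ W ∧ G.Adj v y := by
  rw [closedNbrsIn, mem_insert, mem_nbrsIn]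

lemma nbrsIn_subset (G : SimpleGraph V) (W : Finset V) (x : V) : nbrsIn G W x ⊆ W :=
  filter_subset _ _

lemma closedNbrsIn_subset (G : SimpleGraph V) (hv : v ∈ W) : closedNbrsIn G W v ⊆ W :=
  insert_subset hv (nbrsIn_subset G W v)

lemma nbrsIn_mono (h : W ⊆ W') (x : V) : nbrsIn G W x ⊆ nbrsIn G W' x :=
  filter_subset_filter _ h

lemma self_notMem_nbrsIn : v ∉ nbrsIn G W v := fun h => (mem_nbrsIn.1 h).2.ne rfl

lemma card_closedNbrsIn : #(closedNbrsIn G W v) = #(nbrsIn G W v) + 1 :=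
  card_insert_of_notMem self_notMem_nbrsIn

lemma nbrsIn_sdiff : nbrsIn G (W \ R) x = nbrsIn G W x \ nbrsIn G R x := by
  ext y
  simp only [mem_nbrsIn, mem_sdiff]
  tauto

lemma card_nbrsIn_sdiff_add (G : SimpleGraph V) (hR : R ⊆ W) (x : V) :
    #(nbrsIn G (W \ R) x) + #(nbrsIn G R x) = #(nbrsIn G W x) := by
  rw [nbrsIn_sdiff, card_sdiff_add_card_eq_card (nbrsIn_mono hR x)]

lemma nbrsIn_sdiff_eq_empty (h : nbrsIn G W x ⊆ R) : nbrsIn G (W \ R) x = ∅ := by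
  rw [nbrsIn_sdiff, sdiff_eq_empty_iff_subset]
  exact fun y hy => mem_nbrsIn.2 ⟨h hy, (mem_nbrsIn.1 hy).2⟩

lemma sum_card_nbrsIn_comm (A B : Finset V) :
    ∑ x ∈ A, #(nbrsIn G B x) = ∑ y ∈ B, #(nbrsIn G A y) := by
  refine (sum_card_bipartiteAbove_eq_sum_card_bipartiteBelow G.Adj).trans ?_
  simp only [bipartiteBelow, nbrsIn, G.adj_comm]

lemma ncard_neighborSet_eq_card_nbrsIn_univ [Fintype V] (v : V) :
    (G.neighborSet v).ncard = #(nbrsIn G univ v) := by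
  rw [← Set.ncard_coe_finset]
  congr 1
  ext y
  simp [mem_nbrsIn]

lemma sum_closedNbrsIn_le {b : ℕ → ℕ} (hb : Monotone b) (hb0 : b 0 = 0)
    (hv : v ∈ W) (hmax : ∀ u ∈ W, #(nbrsIn G W u) ≤ #(nbrsIn G W v)) :
    ∑ u ∈ closedNbrsIn G W v, b #(nbrsIn G (W \ closedNbrsIn G W v) u) ≤
      #(nbrsIn G W v) * b (#(nbrsIn G W v) - 1) := by
  have hself : nbrsIn G (W \ closedNbrsIn G W v) v = ∅ :=
    nbrsIn_sdiff_eq_empty (subset_insert _ _)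
  rw [closedNbrsIn, sum_insert self_notMem_nbrsIn, ← closedNbrsIn, hself, card_empty, hb0, zero_add,
    ← smul_eq_mul]
  refine sum_le_card_nsmul _ _ _ fun u hu => hb ?_
  obtain ⟨huW, hvu⟩ := mem_nbrsIn.1 hu
  have hlost : 0 < #(nbrsIn G (closedNbrsIn G W v) u) :=
    card_pos.2 ⟨v, mem_nbrsIn.2 ⟨mem_insert_self _ _, hvu.symm⟩⟩
  have := card_nbrsIn_sdiff_add G (closedNbrsIn_subset G hv) u
  have := hmax u huW
  omega

lemma eq_or_eq_of_adj_of_mem_closedNbrsIn (hmatch : ∀ w ∈ W, #(nbrsIn G W w) ≤ 1) (hv : v ∈ W)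
    (hx : x ∈ closedNbrsIn G W v) (hy : y ∈ W) (hxy : G.Adj x y) : x = v ∨ y = v :=
  (mem_closedNbrsIn.1 hx).imp_right fun ⟨hxW, hvx⟩ =>
    card_le_one.1 (hmatch x hxW) y (mem_nbrsIn.2 ⟨hy, hxy⟩) v (mem_nbrsIn.2 ⟨hv, hvx.symm⟩)

lemma nbrsIn_subset_closedNbrsIn_of_card_le_one (hmatch : ∀ w ∈ W, #(nbrsIn G W w) ≤ 1)
    (hv : v ∈ W) (hx : x ∈ closedNbrsIn G W v) : nbrsIn G W x ⊆ closedNbrsIn G W v := by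
  intro y hy
  obtain ⟨hyW, hxy⟩ := mem_nbrsIn.1 hy
  rcases eq_or_eq_of_adj_of_mem_closedNbrsIn hmatch hv hx hyW hxy with rfl | rfl
  · exact mem_insert_of_mem hy
  · exact mem_insert_self _ _

lemma disjoint_closedNbrsIn_of_card_le_one (hmatch : ∀ w ∈ W, #(nbrsIn G W w) ≤ 1)
    (hu : u ∈ W) (hv : v ∈ W) (huv : u ≠ v) (hadj : ¬ G.Adj u v) :
    Disjoint (closedNbrsIn G W u) (closedNbrsIn G W v) := by
  refine disjoint_left.2 fun y hyu hyv => ?_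
  rcases mem_closedNbrsIn.1 hyu with rfl | ⟨hyW, huy⟩ <;>
    rcases mem_closedNbrsIn.1 hyv with rfl | ⟨-, hvy⟩
  · exact huv rfl
  · exact hadj hvy.symm
  · exact hadj huy
  · exact huv (card_le_one.1 (hmatch y hyW) u (mem_nbrsIn.2 ⟨hu, huy.symm⟩)
      v (mem_nbrsIn.2 ⟨hv, hvy.symm⟩))

end Neighbors

section Greedy

variable {V : Type*} {G : SimpleGraph V} {W R : Finset V} {v : V}

lemma closedNbhd_mono {S T : Set V} (h : S ⊆ T) : closedNbhd G S ⊆ closedNbhd G T :=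
  fun _ hz => hz.imp (@h _) fun ⟨u, hu, huz⟩ => ⟨u, h hu, huz⟩

lemma mem_closedNbhd_singleton {z : V} : z ∈ closedNbhd G {v} ↔ z = v ∨ G.Adj v z := by
  simp [closedNbhd]

/-- `S` isolates the subgraph induced by `W`: every edge inside `W` meets `N[S]`, where the vertices
of `S` need not lie in `W`. -/
def IsolatesOn (G : SimpleGraph V) (W : Finset V) (S : Set V) : Prop :=
  ∀ x ∈ W, ∀ y ∈ W, G.Adj x y → x ∈ closedNbhd G S ∨ y ∈ closedNbhd G S

/-- One round of the greedy construction with active set `W` and potential `Φ`: selecting the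
vertex `v` allows the vertices of `R` to be deactivated, which lowers `Φ` by at least `T`. -/
structure IsGreedyStep (G : SimpleGraph V) (Φ : Finset V → ℕ) (T : ℕ) (W : Finset V) (v : V)
    (R : Finset V) : Prop where
  subset : R ⊆ W
  nonempty : R.Nonempty
  potential_add_le : Φ (W \ R) + T ≤ Φ W
  covers : ∀ x ∈ R, ∀ y ∈ W, G.Adj x y → x ∈ closedNbhd G {v} ∨ y ∈ closedNbhd G {v}

lemma IsGreedyStep.isolatesOn_insert {Φ : Finset V → ℕ} {T : ℕ} {S : Set V}
    (hstep : IsGreedyStep G Φ T W v R) (hS : IsolatesOn G (W \ R) S) :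
    IsolatesOn G W (insert v S) := by
  have hv : closedNbhd G {v} ⊆ closedNbhd G (insert v S) := closedNbhd_mono (by simp)
  have hS' : closedNbhd G S ⊆ closedNbhd G (insert v S) := closedNbhd_mono (Set.subset_insert _ _)
  intro x hx y hy hxy
  by_cases hxR : x ∈ R
  · exact (hstep.covers x hxR y hy hxy).imp (@hv x) (@hv y)
  by_cases hyR : y ∈ R
  · exact (hstep.covers y hyR x hx hxy.symm).symm.imp (@hv x) (@hv y)
  exact (hS x (mem_sdiff.2 ⟨hx, hxR⟩) y (mem_sdiff.2 ⟨hy, hyR⟩) hxy).imp (@hS' x) (@hS' y)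

lemma IsolatesOn.of_sdiff_singleton {S : Set V} (hv : nbrsIn G W v = ∅)
    (hS : IsolatesOn G (W \ {v}) S) : IsolatesOn G W S := by
  have hiso : ∀ y ∈ W, ¬ G.Adj v y := fun y hy hvy => notMem_empty y (hv ▸ mem_nbrsIn.2 ⟨hy, hvy⟩)
  intro x hx y hy hxy
  have hxv : x ≠ v := by rintro rfl; exact hiso y hy hxy
  have hyv : y ≠ v := by rintro rfl; exact hiso x hx hxy.symm
  exact hS x (by simp [hx, hxv]) y (by simp [hy, hyv]) hxy

theorem exists_isolatesOn_card_mul_le {Φ : Finset V → ℕ} {T : ℕ}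
    (hisolated : ∀ W, ∀ v ∈ W, nbrsIn G W v = ∅ → Φ (W \ {v}) ≤ Φ W)
    (hstep : ∀ W : Finset V, W.Nonempty → (∀ v ∈ W, (nbrsIn G W v).Nonempty) →
      ∃ v R, IsGreedyStep G Φ T W v R) (W : Finset V) :
    ∃ S : Finset V, T * #S ≤ Φ W ∧ IsolatesOn G W S := by
  induction W using Finset.strongInduction with
  | H W ih =>
  rcases W.eq_empty_or_nonempty with rfl | hne
  · exact ⟨∅, by simp, by simp [IsolatesOn]⟩
  by_cases hactive : ∀ v ∈ W, (nbrsIn G W v).Nonempty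
  · obtain ⟨v, R, hvR⟩ := hstep W hne hactive
    obtain ⟨S, hcard, hS⟩ := ih _ (sdiff_ssubset hvR.subset hvR.nonempty)
    refine ⟨insert v S, ?_, by simpa using hvR.isolatesOn_insert hS⟩
    calc T * #(insert v S) ≤ T * (#S + 1) := Nat.mul_le_mul_left T (card_insert_le v S)
      _ = T * #S + T := by ring
      _ ≤ Φ (W \ R) + T := by gcongr
      _ ≤ Φ W := hvR.potential_add_le
  · push Not at hactive
    obtain ⟨v, hv, hiso⟩ := hactive
    obtain ⟨S, hcard, hS⟩ := ih _ (sdiff_ssubset (singleton_subset_iff.2 hv) (singleton_nonempty v))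
    exact ⟨S, hcard.trans (hisolated W v hv hiso), hS.of_sdiff_singleton hiso⟩

lemma isolationNumber_le_card [Fintype V] {S : Finset V} (hS : IsolatesOn G univ S) :
    isolationNumber G ≤ #S :=
  Nat.sInf_le ⟨S, fun u v => hS u (mem_univ u) v (mem_univ v), Set.ncard_coe_finset S⟩

end Greedy

section Potential

variable {V : Type*} [Fintype V] {G : SimpleGraph V} {a s D T δ : ℕ} {b : ℕ → ℕ}
  {W R : Finset V} {v x u₁ u₂ : V}

/-- The potential of the active set `W`: each active vertex has weight `a`, and each inactive vertex
with `d` active neighbours has weight `b d`. -/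
noncomputable def potential (G : SimpleGraph V) (a : ℕ) (b : ℕ → ℕ) (W : Finset V) : ℕ :=
  a * #W + ∑ x ∈ Wᶜ, b #(nbrsIn G W x)

lemma potential_univ : potential G a b univ = a * Fintype.card V := by
  simp [potential]

-- Both sides carry the terms that the other loses, so that no subtraction occurs.
lemma potential_sdiff_add (G : SimpleGraph V) (a : ℕ) (b : ℕ → ℕ) (hR : R ⊆ W) :
    potential G a b (W \ R) + a * #R + ∑ x ∈ Wᶜ, b #(nbrsIn G W x) =
      potential G a b W + ∑ u ∈ R, b #(nbrsIn G (W \ R) u) +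
        ∑ x ∈ Wᶜ, b #(nbrsIn G (W \ R) x) := by
  have hcompl : (W \ R)ᶜ = Wᶜ ∪ R := by rw [sdiff_eq_inter_compl, compl_inter, compl_compl]
  have hdisj : Disjoint Wᶜ R := disjoint_compl_left.mono_right hR
  rw [potential, potential, hcompl, sum_union hdisj, ← card_sdiff_add_card_eq_card hR]
  ring

lemma potential_sdiff_add_card_mul_le (G : SimpleGraph V) (a : ℕ) (hb : Monotone b)
    (hR : R ⊆ W) :
    potential G a b (W \ R) + a * #R ≤
      potential G a b W + ∑ u ∈ R, b #(nbrsIn G (W \ R) u) := by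
  have hdecrease : ∑ x ∈ Wᶜ, b #(nbrsIn G (W \ R) x) ≤ ∑ x ∈ Wᶜ, b #(nbrsIn G W x) :=
    sum_le_sum fun x _ => hb (card_le_card (nbrsIn_mono sdiff_subset x))
  have := potential_sdiff_add G a b hR
  omega

lemma potential_sdiff_singleton_le (hb : Monotone b) (hba : b 0 ≤ a) (hv : v ∈ W)
    (hiso : nbrsIn G W v = ∅) : potential G a b (W \ {v}) ≤ potential G a b W := by
  have hdrop := potential_sdiff_add_card_mul_le G a hb (singleton_subset_iff.2 hv)
  have hempty : nbrsIn G (W \ {v}) v = ∅ := nbrsIn_sdiff_eq_empty (by simp [hiso])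
  rw [card_singleton, sum_singleton, hempty, card_empty] at hdrop
  omega

lemma add_mul_le_of_add_le_succ {n k m : ℕ} (hb : ∀ j < n, b j + s ≤ b (j + 1))
    (hmk : m + k ≤ n) : b m + s * k ≤ b (m + k) := by
  induction k with
  | zero => simp
  | succ k ih =>
    calc b m + s * (k + 1) = b m + s * k + s := by ring
      _ ≤ b (m + k) + s := Nat.add_le_add_right (ih (by omega)) s
      _ ≤ b (m + (k + 1)) := hb (m + k) (by omega)

lemma potential_sdiff_add_edges_le (a : ℕ)
    (hslope : ∀ x ∉ W, ∀ m < #(nbrsIn G W x), b m + s ≤ b (m + 1)) (hR : R ⊆ W) :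
    potential G a b (W \ R) + a * #R + s * ∑ u ∈ R, #(nbrsIn G Wᶜ u) ≤
      potential G a b W + ∑ u ∈ R, b #(nbrsIn G (W \ R) u) := by
  have hdecrease : ∑ x ∈ Wᶜ, b #(nbrsIn G (W \ R) x) + s * ∑ u ∈ R, #(nbrsIn G Wᶜ u) ≤
      ∑ x ∈ Wᶜ, b #(nbrsIn G W x) := by
    rw [← sum_card_nbrsIn_comm, mul_sum, ← sum_add_distrib]
    refine sum_le_sum fun x hx => ?_
    have hsplit := card_nbrsIn_sdiff_add G hR x
    rw [← hsplit]
    exact add_mul_le_of_add_le_succ (hslope x (mem_compl.1 hx)) hsplit.le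
  have := potential_sdiff_add G a b hR
  omega

lemma card_mul_le_sum_card_nbrsIn_compl {p : ℕ} (hδ : ∀ u, δ ≤ #(nbrsIn G univ u)) (hR : R ⊆ W)
    (hmax : ∀ u ∈ W, #(nbrsIn G W u) ≤ p) :
    #R * (δ - p) ≤ ∑ u ∈ R, #(nbrsIn G Wᶜ u) := by
  rw [← smul_eq_mul]
  refine card_nsmul_le_sum _ _ _ fun u hu => ?_
  have hsplit := card_nbrsIn_sdiff_add G (subset_univ W) u
  rw [← compl_eq_univ_sdiff] at hsplit
  have := hmax u (hR hu)
  have := hδ u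
  omega

lemma isGreedyStep_closedNbrsIn (hδ : ∀ u, δ ≤ #(nbrsIn G univ u)) (hb : Monotone b)
    (hb0 : b 0 = 0) (hv : v ∈ W) (hmax : ∀ u ∈ W, #(nbrsIn G W u) ≤ #(nbrsIn G W v))
    (hslope : ∀ x ∉ W, ∀ m < #(nbrsIn G W x), b m + s ≤ b (m + 1))
    (hT : #(nbrsIn G W v) * b (#(nbrsIn G W v) - 1) + T ≤
      a * (#(nbrsIn G W v) + 1) + s * ((#(nbrsIn G W v) + 1) * (δ - #(nbrsIn G W v)))) :
    IsGreedyStep G (potential G a b) T W v (closedNbrsIn G W v) where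
  subset := closedNbrsIn_subset G hv
  nonempty := insert_nonempty v _
  potential_add_le := by
    have hdrop := potential_sdiff_add_edges_le a hslope (closedNbrsIn_subset G hv)
    have hedges := Nat.mul_le_mul_left s
      (card_mul_le_sum_card_nbrsIn_compl hδ (closedNbrsIn_subset G hv) hmax)
    have hremaining := sum_closedNbrsIn_le hb hb0 hv hmax
    rw [card_closedNbrsIn] at hdrop hedges
    omega
  covers x hx _ _ _ := .inl <| mem_closedNbhd_singleton.2 <|
    (mem_closedNbrsIn.1 hx).imp_right And.right

lemma isGreedyStep_nbrsIn (hb : Monotone b) (hb0 : b 0 = 0) (hx : x ∉ W)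
    (hne : (nbrsIn G W x).Nonempty) (hD : ∀ u ∈ W, #(nbrsIn G W u) ≤ D)
    (hT : #(nbrsIn G W x) * b D + T ≤ a * #(nbrsIn G W x) + b #(nbrsIn G W x)) :
    IsGreedyStep G (potential G a b) T W x (nbrsIn G W x) where
  subset := nbrsIn_subset G W x
  nonempty := hne
  potential_add_le := by
    have hcard_le (u : V) : #(nbrsIn G (W \ nbrsIn G W x) u) ≤ #(nbrsIn G W u) :=
      card_le_card (nbrsIn_mono sdiff_subset u)
    have hself : b #(nbrsIn G (W \ nbrsIn G W x) x) = 0 := by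
      rw [nbrsIn_sdiff_eq_empty Subset.rfl, card_empty, hb0]
    have hinactive : ∑ y ∈ Wᶜ, b #(nbrsIn G (W \ nbrsIn G W x) y) + b #(nbrsIn G W x) ≤
        ∑ y ∈ Wᶜ, b #(nbrsIn G W y) := by
      rw [← add_sum_erase Wᶜ _ (mem_compl.2 hx), ← add_sum_erase Wᶜ _ (mem_compl.2 hx), hself,
        zero_add, add_comm]
      gcongr with y
      exact hb (hcard_le y)
    have hremaining : ∑ u ∈ nbrsIn G W x, b #(nbrsIn G (W \ nbrsIn G W x) u) ≤
        #(nbrsIn G W x) * b D :=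
      sum_le_card_nsmul _ _ _ fun u hu => hb ((hcard_le u).trans (hD u (nbrsIn_subset G W x hu)))
    have := potential_sdiff_add G a b (nbrsIn_subset G W x)
    omega
  covers y hy _ _ _ := .inl <| mem_closedNbhd_singleton.2 <| .inr (mem_nbrsIn.1 hy).2

lemma isGreedyStep_union_closedNbrsIn (hb : Monotone b) (hb0 : b 0 = 0)
    (hmatch : ∀ u ∈ W, #(nbrsIn G W u) = 1) (hu₁ : u₁ ∈ nbrsIn G W x) (hu₂ : u₂ ∈ nbrsIn G W x)
    (hne : u₁ ≠ u₂) (hadj : ¬ G.Adj u₁ u₂) (hT : T ≤ 4 * a) :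
    IsGreedyStep G (potential G a b) T W x (closedNbrsIn G W u₁ ∪ closedNbrsIn G W u₂) := by
  have hmatch_le : ∀ u ∈ W, #(nbrsIn G W u) ≤ 1 := fun u hu => (hmatch u hu).le
  have hu₁W : u₁ ∈ W := nbrsIn_subset G W x hu₁
  have hu₂W : u₂ ∈ W := nbrsIn_subset G W x hu₂
  have hsub : closedNbrsIn G W u₁ ∪ closedNbrsIn G W u₂ ⊆ W :=
    union_subset (closedNbrsIn_subset G hu₁W) (closedNbrsIn_subset G hu₂W)
  have hcard : #(closedNbrsIn G W u₁ ∪ closedNbrsIn G W u₂) = 4 := by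
    rw [card_union_of_disjoint
      (disjoint_closedNbrsIn_of_card_le_one hmatch_le hu₁W hu₂W hne hadj),
      card_closedNbrsIn, card_closedNbrsIn, hmatch u₁ hu₁W, hmatch u₂ hu₂W]
  have hclosed : ∀ y ∈ closedNbrsIn G W u₁ ∪ closedNbrsIn G W u₂,
      nbrsIn G W y ⊆ closedNbrsIn G W u₁ ∪ closedNbrsIn G W u₂ := by
    intro y hy
    rcases mem_union.1 hy with hy | hy
    · exact (nbrsIn_subset_closedNbrsIn_of_card_le_one hmatch_le hu₁W hy).trans subset_union_left
    · exact (nbrsIn_subset_closedNbrsIn_of_card_le_one hmatch_le hu₂W hy).trans subset_union_right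
  have hcovers : ∀ u ∈ nbrsIn G W x, ∀ y ∈ closedNbrsIn G W u, ∀ t ∈ W, G.Adj y t →
      y ∈ closedNbhd G {x} ∨ t ∈ closedNbhd G {x} := by
    intro u hu y hy t ht hyt
    obtain ⟨huW, hxu⟩ := mem_nbrsIn.1 hu
    have hux : u ∈ closedNbhd G {x} := mem_closedNbhd_singleton.2 (.inr hxu)
    rcases eq_or_eq_of_adj_of_mem_closedNbrsIn hmatch_le huW hy ht hyt with rfl | rfl
    · exact .inl hux
    · exact .inr hux
  refine ⟨hsub, ⟨u₁, mem_union_left _ (mem_insert_self _ _)⟩, ?_, fun y hy => ?_⟩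
  · have hdrop := potential_sdiff_add_card_mul_le G a hb hsub
    rw [sum_eq_zero fun y hy => by rw [nbrsIn_sdiff_eq_empty (hclosed y hy), card_empty, hb0],
      hcard] at hdrop
    omega
  · exact (mem_union.1 hy).elim (hcovers u₁ hu₁ y) (hcovers u₂ hu₂ y)

end Potential

section MinDegreeFive

/-- The weight of an inactive vertex with `d` active neighbours, namely `0, 33, 50, 67, 84, 84, …`,
scaled to the weight `180` of an active vertex and the potential drop `620` per selected vertex. -/
def residualWeight (d : ℕ) : ℕ := if d = 0 then 0 else min (17 * d + 16) 84

lemma residualWeight_zero : residualWeight 0 = 0 := rfl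

lemma residualWeight_mono : Monotone residualWeight := by
  intro m n h
  unfold residualWeight
  split_ifs <;> omega

lemma residualWeight_le (d : ℕ) : residualWeight d ≤ 84 := by
  unfold residualWeight
  split_ifs <;> omega

lemma residualWeight_of_four_le {d : ℕ} (hd : 4 ≤ d) : residualWeight d = 84 := by
  unfold residualWeight
  split_ifs <;> omega

lemma residualWeight_add_le_succ {d : ℕ} (hd : d < 4) :
    residualWeight d + 17 ≤ residualWeight (d + 1) := by
  interval_cases d <;> decide

variable {V : Type*} [Fintype V] {G : SimpleGraph V} {W : Finset V} {v : V}

lemma exists_isGreedyStep_of_four_le (hv : v ∈ W)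
    (hmax : ∀ u ∈ W, #(nbrsIn G W u) ≤ #(nbrsIn G W v)) (hp : 4 ≤ #(nbrsIn G W v)) :
    ∃ x R, IsGreedyStep G (potential G 180 residualWeight) 620 W x R := by
  refine ⟨v, _, isGreedyStep_closedNbrsIn (δ := 0) (s := 0) (fun _ => Nat.zero_le _)
    residualWeight_mono residualWeight_zero hv hmax
    (fun _ _ m _ => residualWeight_mono m.le_succ) ?_⟩
  rcases hp.eq_or_lt with hp4 | hp5
  · rw [← hp4]
    decide
  · have := Nat.mul_le_mul_left #(nbrsIn G W v) (residualWeight_le (#(nbrsIn G W v) - 1))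
    omega

lemma exists_isGreedyStep_of_two_or_three (hmin : ∀ u, 5 ≤ #(nbrsIn G univ u)) (hv : v ∈ W)
    (hmax : ∀ u ∈ W, #(nbrsIn G W u) ≤ #(nbrsIn G W v))
    (hp : #(nbrsIn G W v) = 2 ∨ #(nbrsIn G W v) = 3) :
    ∃ x R, IsGreedyStep G (potential G 180 residualWeight) 620 W x R := by
  by_cases hlarge : ∃ x ∉ W, 5 ≤ #(nbrsIn G W x)
  · obtain ⟨x, hx, hxdeg⟩ := hlarge
    refine ⟨x, _, isGreedyStep_nbrsIn (D := 3) residualWeight_mono residualWeight_zero hx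
      (card_pos.1 (by omega)) (fun u hu => (hmax u hu).trans (by omega)) ?_⟩
    have hthree : residualWeight 3 = 67 := rfl
    rw [hthree, residualWeight_of_four_le (by omega)]
    omega
  · push Not at hlarge
    refine ⟨v, _, isGreedyStep_closedNbrsIn (s := 17) hmin residualWeight_mono
      residualWeight_zero hv hmax (fun x hx m hm => residualWeight_add_le_succ ?_) ?_⟩
    · have := hlarge x hx
      omega
    · rcases hp with hp | hp <;> rw [hp] <;> decide

lemma exists_isGreedyStep_of_matching (htf : G.CliqueFree 3)
    (hmin : ∀ u, 5 ≤ #(nbrsIn G univ u)) (hne : W.Nonempty)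
    (hmatch : ∀ u ∈ W, #(nbrsIn G W u) = 1) :
    ∃ x R, IsGreedyStep G (potential G 180 residualWeight) 620 W x R := by
  by_cases hlarge : ∃ x ∉ W, 2 ≤ #(nbrsIn G W x)
  · obtain ⟨x, -, hxdeg⟩ := hlarge
    obtain ⟨u₁, hu₁, u₂, hu₂, hne⟩ := one_lt_card.1 hxdeg
    have hadj : ¬ G.Adj u₁ u₂ := G.isIndepSet_neighborSet_of_triangleFree htf x
      (mem_nbrsIn.1 hu₁).2 (mem_nbrsIn.1 hu₂).2 hne
    exact ⟨x, _, isGreedyStep_union_closedNbrsIn residualWeight_mono residualWeight_zero hmatch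
      hu₁ hu₂ hne hadj (by norm_num)⟩
  · push Not at hlarge
    obtain ⟨v, hv⟩ := hne
    have hmax : ∀ u ∈ W, #(nbrsIn G W u) ≤ #(nbrsIn G W v) := fun u hu => by
      rw [hmatch u hu, hmatch v hv]
    refine ⟨v, _, isGreedyStep_closedNbrsIn (s := 33) hmin residualWeight_mono
      residualWeight_zero hv hmax (fun x hx m hm => ?_) ?_⟩
    · obtain rfl : m = 0 := by have := hlarge x hx; omega
      decide
    · rw [hmatch v hv]
      decide

theorem exists_isGreedyStep (htf : G.CliqueFree 3) (hmin : ∀ u, 5 ≤ #(nbrsIn G univ u))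
    (hne : W.Nonempty) (hactive : ∀ u ∈ W, (nbrsIn G W u).Nonempty) :
    ∃ x R, IsGreedyStep G (potential G 180 residualWeight) 620 W x R := by
  obtain ⟨v, hv, hmax⟩ := exists_max_image W (fun u => #(nbrsIn G W u)) hne
  have hpos : ∀ u ∈ W, 1 ≤ #(nbrsIn G W u) := fun u hu => card_pos.2 (hactive u hu)
  by_cases hp4 : 4 ≤ #(nbrsIn G W v)
  · exact exists_isGreedyStep_of_four_le hv hmax hp4
  by_cases hp2 : 2 ≤ #(nbrsIn G W v)
  · exact exists_isGreedyStep_of_two_or_three hmin hv hmax (by omega)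
  · exact exists_isGreedyStep_of_matching htf hmin hne fun u hu =>
      le_antisymm ((hmax u hu).trans (by omega)) (hpos u hu)

end MinDegreeFive

end Isolation

/-- If `G` is triangle-free of order `n` with minimum degree at least 5,
then `ι(G) ≤ 9n/31`. -/
theorem isolation_number_triangleFree_minDegree_five {V : Type*} [Fintype V]
    (G : SimpleGraph V) (n : ℕ) (hn : Fintype.card V = n)
    (htf : G.CliqueFree 3) (hmin : ∀ v : V, 5 ≤ (G.neighborSet v).ncard) :
    (isolationNumber G : ℝ) ≤ 9 * n / 31 := by
  have hmin' : ∀ v, 5 ≤ (Isolation.nbrsIn G Finset.univ v).card := fun v =>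
    (hmin v).trans_eq (Isolation.ncard_neighborSet_eq_card_nbrsIn_univ v)
  obtain ⟨S, hcard, hS⟩ := Isolation.exists_isolatesOn_card_mul_le
    (fun _ _ => Isolation.potential_sdiff_singleton_le Isolation.residualWeight_mono (by decide))
    (fun _ => Isolation.exists_isGreedyStep htf hmin') Finset.univ
  rw [Isolation.potential_univ, hn] at hcard
  have hle : isolationNumber G ≤ S.card := Isolation.isolationNumber_le_card hS
  have hnat : isolationNumber G * 31 ≤ 9 * n := by omega
  rw [le_div_iff₀ (by norm_num)]
  exact_mod_cast hnat
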